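/- Let R be a CI-ring with identity and A₁, …, Aₙ pairwise comaximal two-sided ideals such that each quotient R/Aᵢ has a finite unit group. Define the Euler function of an ideal A by φ(A) = |U(R/A)|, the cardinality of the group of units of R/A. Then φ(A₁A₂⋯Aₙ) = φ(A₁)·φ(A₂)⋯φ(Aₙ). -/

import Mathlib

open Pointwise

/-- The product of two two-sided ideals: the two-sided ideal generated by pointwise products. -/
def tmul {R : Type*} [Ring R] (A B : TwoSidedIdeal R) : TwoSidedIdeal R :=
  TwoSidedIdeal.span ((A : Set R) * (B : Set R))

/-- A CI-ring is a ring in which any two two-sided ideals commute. -/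
def IsCIRing (R : Type*) [Ring R] : Prop :=
  ∀ A B : TwoSidedIdeal R, tmul A B = tmul B A

/-- The ordered product of a list of two-sided ideals. -/
def tmulList {R : Type*} [Ring R] (l : List (TwoSidedIdeal R)) : TwoSidedIdeal R :=
  l.foldr tmul ⊤

theorem one_decomp {R : Type*} [Ring R] {A B : TwoSidedIdeal R} (h : A ⊔ B = ⊤) :
    ∃ a ∈ A, ∃ b ∈ B, a + b = 1 := by
  have : (1 : R) ∈ A ⊔ B := by rw [h]; trivial
  exact TwoSidedIdeal.mem_sup.1 this

theorem tmul_mem {R : Type*} [Ring R] {A B : TwoSidedIdeal R} {a b : R} (ha : a ∈ A)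
    (hb : b ∈ B) : a * b ∈ tmul A B :=
  TwoSidedIdeal.subset_span (Set.mul_mem_mul ha hb)

theorem tmul_le {R : Type*} [Ring R] (A B : TwoSidedIdeal R) : tmul A B ≤ A ⊓ B := by
  unfold tmul
  rw [TwoSidedIdeal.span_le]
  rintro _ ⟨a, ha, b, hb, rfl⟩
  exact (TwoSidedIdeal.mem_inf _).2 ⟨A.mul_mem_right _ _ ha, B.mul_mem_left _ _ hb⟩

theorem tmul_eq {R : Type*} [Ring R] (hR : IsCIRing R) {A B : TwoSidedIdeal R}
    (h : A ⊔ B = ⊤) : tmul A B = A ⊓ B := by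
  refine le_antisymm (tmul_le A B) fun x hx => ?_
  obtain ⟨hA, hB⟩ := (TwoSidedIdeal.mem_inf _).1 hx
  obtain ⟨a, ha, b, hb, hab⟩ := one_decomp h
  rw [← mul_one x, ← hab, mul_add]
  refine (tmul A B).add_mem ?_ (tmul_mem hA hb)
  rw [hR A B]
  exact tmul_mem hB ha

theorem top_of_decomp {R : Type*} [Ring R] {A B : TwoSidedIdeal R} {a b : R} (ha : a ∈ A)
    (hb : b ∈ B) (h : a + b = 1) : A ⊔ B = ⊤ := by
  have h1 : (1 : R) ∈ A ⊔ B := TwoSidedIdeal.mem_sup.2 ⟨a, ha, b, hb, h⟩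
  refine top_le_iff.1 fun x _ => ?_
  simpa using (A ⊔ B).mul_mem_left x 1 h1

theorem sup_tmul {R : Type*} [Ring R] {A B C : TwoSidedIdeal R}
    (h : A ⊔ B = ⊤) (h' : A ⊔ C = ⊤) : A ⊔ tmul B C = ⊤ := by
  obtain ⟨a, ha, b, hb, hab⟩ := one_decomp h
  obtain ⟨a', ha', c, hc, hac⟩ := one_decomp h'
  refine top_of_decomp (a := a + b * a') (A.add_mem ha (A.mul_mem_left _ _ ha'))
    (tmul_mem hb hc) ?_
  rw [add_assoc, ← mul_add, hac, mul_one, hab]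

theorem sup_tmulList {R : Type*} [Ring R] {A : TwoSidedIdeal R} (l : List (TwoSidedIdeal R))
    (h : ∀ B ∈ l, A ⊔ B = ⊤) : A ⊔ tmulList l = ⊤ := by
  induction l with
  | nil => exact sup_top_eq A
  | cons B l ih =>
    exact sup_tmul (h B (by simp)) (ih fun C hC => h C (by simp [hC]))

theorem mk_eq_iff {R : Type*} [Ring R] (A : TwoSidedIdeal R) (x y : R) :
    A.ringCon.mk' x = A.ringCon.mk' y ↔ x - y ∈ A :=
  (RingCon.eq A.ringCon).trans (A.rel_iff x y)

theorem card_inf {R : Type*} [Ring R] {A B : TwoSidedIdeal R} (h : A ⊔ B = ⊤) :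
    Nat.card ((A ⊓ B).ringCon.Quotient)ˣ =
      Nat.card (A.ringCon.Quotient)ˣ * Nat.card (B.ringCon.Quotient)ˣ := by
  let f : R →+* A.ringCon.Quotient × B.ringCon.Quotient :=
    A.ringCon.mk'.prod B.ringCon.mk'
  have hf : ∀ x y, (A ⊓ B).ringCon x y ↔ f x = f y := fun x y => by
    rw [TwoSidedIdeal.rel_iff, TwoSidedIdeal.mem_inf, Prod.ext_iff]
    exact and_congr (mk_eq_iff A x y).symm (mk_eq_iff B x y).symm
  let g := (A ⊓ B).ringCon.lift f (fun x y hxy => (hf x y).1 hxy)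
  have hg : Function.Bijective g := by
    constructor
    · intro x y
      induction x using Quotient.inductionOn'
      induction y using Quotient.inductionOn'
      intro hxy
      exact (RingCon.eq _).2 ((hf _ _).2 hxy)
    · rintro ⟨x, y⟩
      induction x using Quotient.inductionOn' with | _ x
      induction y using Quotient.inductionOn' with | _ y
      obtain ⟨a, ha, b, hb, hab⟩ := one_decomp h
      refine ⟨(A ⊓ B).ringCon.mk' (x * b + y * a), Prod.ext ?_ ?_⟩
      · refine (mk_eq_iff A _ x).2 ?_
        have : x * b + y * a - x = y * a - x * a := by
          rw [← eq_sub_iff_add_eq'] at hab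
          rw [hab]; noncomm_ring
        rw [this]
        exact A.sub_mem (A.mul_mem_left _ _ ha) (A.mul_mem_left _ _ ha)
      · refine (mk_eq_iff B _ y).2 ?_
        have : x * b + y * a - y = x * b - y * b := by
          rw [← eq_sub_iff_add_eq] at hab
          rw [hab]; noncomm_ring
        rw [this]
        exact B.sub_mem (B.mul_mem_left _ _ hb) (B.mul_mem_left _ _ hb)
  rw [Nat.card_congr (Units.mapEquiv (RingEquiv.ofBijective g hg).toMulEquiv).toEquiv,
    Nat.card_congr MulEquiv.prodUnits.toEquiv, Nat.card_prod]

/-- The Euler function of ideals, φ(A) = |U(R/A)|, is multiplicative on pairwise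
comaximal ideals of a CI-ring. -/
theorem euler_function_multiplicative {R : Type*} [Ring R] (hR : IsCIRing R)
    {n : ℕ} (A : Fin n → TwoSidedIdeal R) (hco : ∀ i j, i ≠ j → A i ⊔ A j = ⊤)
    (hfin : ∀ i, Finite ((A i).ringCon.Quotient)ˣ) :
    Nat.card ((tmulList (List.ofFn A)).ringCon.Quotient)ˣ =
      ∏ i, Nat.card ((A i).ringCon.Quotient)ˣ := by
  clear hfin
  induction n with
  | zero =>
    have : Subsingleton ((tmulList (List.ofFn A)).ringCon.Quotient) := by
      constructor
      intro x y
      induction x using Quotient.inductionOn'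
      induction y using Quotient.inductionOn'
      refine (mk_eq_iff _ _ _).2 ?_
      simp only [List.ofFn_zero]
      exact TwoSidedIdeal.mem_top R
    simp
  | succ n ih =>
    rw [List.ofFn_succ, Fin.prod_univ_succ,
      ← ih (fun i => A i.succ) (fun i j hij => hco _ _ (by simpa using hij))]
    have h : A 0 ⊔ tmulList (List.ofFn fun i : Fin n => A i.succ) = ⊤ := by
      refine sup_tmulList _ fun B hB => ?_
      obtain ⟨i, rfl⟩ := (List.mem_ofFn' _ _).1 hB
      exact hco _ _ (Fin.succ_ne_zero i).symm
    rw [← card_inf h, ← tmul_eq hR h]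
    rfl
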